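/- Let L n denote the number of lambda terms of size n. Then the sequence n ↦ L n · ρ^n · n^{3/2} converges to C as n → ∞; that is, L n ∼ (1/ρ)^n · C / n^{3/2}. -/

import Mathlib

/-- Lambda terms with de Bruijn indices. -/
inductive Term : Type
  | var : ℕ → Term
  | app : Term → Term → Term
  | abs : Term → Term

namespace Term

/-- Natural size: every operator (zero, successor, application, abstraction) has size 1. -/
def size : Term → ℕ
  | var k => k + 1
  | app M N => M.size + N.size + 1
  | abs M => M.size + 1

end Term

/-- `L n` is the number of lambda terms of size `n`. -/
noncomputable def L (n : ℕ) : ℕ := Nat.card {t : Term // t.size = n}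

/-!
Decomposing a term at its root gives `T = X (1 / (1 - X) + T + T²)` for the generating function `T`
of `L`, so `D = 1 - X - 2XT` is a square root of `(1 - X)² - 4X² / (1 - X)`. After rescaling `X` by
`ρ`, this becomes `D² = (1 - X) (1 + V)` with a power series `V` whose weighted `ℓ¹` norm is less
than `1` for some radius `r > 1`. Hence `D = (1 - X)^(1/2) G`, where `G = (1 + V)^(1/2)` converges
absolutely on the disc of radius `r`. By Euler's limit formula for `Γ`, the coefficients of
`(1 - X)^a` are asymptotic to `n^(-a-1) / Γ(-a)`, and by dominated convergence multiplication by `G`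
only multiplies this asymptotic by `G(1)`.
-/

open Filter Topology Finset
open PowerSeries (X C coeff constantCoeff rescale HasSubst)
open scoped ENNReal NNReal PowerSeries

/-! ### Sequences of power-law decay -/

section Convolution

theorem tendsto_natCast_add_div_rpow (j : ℕ) (β : ℝ) :
    Tendsto (fun n : ℕ => (((n + j : ℕ) : ℝ) / n) ^ β) atTop (𝓝 1) := by
  have hratio : Tendsto (fun n : ℕ => 1 + (j : ℝ) / n) atTop (𝓝 1) := by
    simpa using (tendsto_const_div_atTop_nhds_zero_nat (j : ℝ)).const_add 1
  have hpow := hratio.rpow_const (p := β) (Or.inl one_ne_zero)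
  rw [Real.one_rpow] at hpow
  refine hpow.congr' ?_
  filter_upwards [eventually_ne_atTop 0] with n hn
  rw [Nat.cast_add, add_div, div_self (Nat.cast_ne_zero.2 hn)]

theorem tendsto_mul_natCast_add_rpow_iff {a : ℕ → ℝ} {β ℓ : ℝ} (j : ℕ) :
    Tendsto (fun n => a n * ((n + j : ℕ) : ℝ) ^ β) atTop (𝓝 ℓ) ↔
      Tendsto (fun n => a n * (n : ℝ) ^ β) atTop (𝓝 ℓ) := by
  have hratio := tendsto_natCast_add_div_rpow j β
  have hpos : ∀ᶠ n : ℕ in atTop, (0 : ℝ) < n :=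
    (eventually_gt_atTop 0).mono fun n hn => Nat.cast_pos.2 hn
  constructor <;> intro h
  · rw [← div_one ℓ]
    refine (h.div hratio one_ne_zero).congr' ?_
    filter_upwards [hpos] with n hn
    have hnj : (0 : ℝ) < (n + j : ℕ) := by push_cast; positivity
    rw [Pi.div_apply, Real.div_rpow hnj.le hn.le, div_div_eq_mul_div, mul_right_comm,
      mul_div_cancel_right₀ _ (Real.rpow_pos_of_pos hnj β).ne']
  · rw [← mul_one ℓ]
    refine (h.mul hratio).congr' ?_
    filter_upwards [hpos] with n hn
    rw [Real.div_rpow (Nat.cast_nonneg _) hn.le, mul_assoc,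
      mul_div_cancel₀ _ (Real.rpow_pos_of_pos hn β).ne']

theorem exists_abs_mul_natCast_add_rpow_le {a : ℕ → ℝ} {β ℓ : ℝ} (hβ : 0 ≤ β)
    (ha : Tendsto (fun n => a n * (n : ℝ) ^ β) atTop (𝓝 ℓ)) :
    ∃ M, ∀ k j : ℕ, |a k| * ((k + j : ℕ) : ℝ) ^ β ≤ M * ((j : ℝ) + 1) ^ β := by
  obtain ⟨M, hM⟩ := ((tendsto_mul_natCast_add_rpow_iff 1).2 ha).abs.bddAbove_range
  refine ⟨M, fun k j => ?_⟩
  have hle : ((k + j : ℕ) : ℝ) ≤ ((k + 1 : ℕ) : ℝ) * (j + 1) := by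
    push_cast
    nlinarith [mul_nonneg (Nat.cast_nonneg (α := ℝ) k) (Nat.cast_nonneg (α := ℝ) j)]
  calc |a k| * ((k + j : ℕ) : ℝ) ^ β
      ≤ |a k| * (((k + 1 : ℕ) : ℝ) * (j + 1)) ^ β := by gcongr
    _ = |a k * ((k + 1 : ℕ) : ℝ) ^ β| * ((j : ℝ) + 1) ^ β := by
        rw [Real.mul_rpow (by positivity) (by positivity), abs_mul,
          abs_of_nonneg (Real.rpow_nonneg (Nat.cast_nonneg (k + 1)) β), mul_assoc]
    _ ≤ M * ((j : ℝ) + 1) ^ β := by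
        gcongr
        exact hM ⟨k, rfl⟩

theorem tendsto_sum_antidiagonal_mul_rpow {a g : ℕ → ℝ} {β ℓ : ℝ} (hβ : 0 ≤ β)
    (ha : Tendsto (fun n => a n * (n : ℝ) ^ β) atTop (𝓝 ℓ))
    (hg : Summable fun j => |g j| * ((j : ℝ) + 1) ^ β) :
    Tendsto (fun n => (∑ p ∈ antidiagonal n, a p.1 * g p.2) * (n : ℝ) ^ β) atTop
      (𝓝 (ℓ * ∑' j, g j)) := by
  obtain ⟨M, hM⟩ := exists_abs_mul_natCast_add_rpow_le hβ ha
  let f : ℕ → ℕ → ℝ := fun n j => if j ≤ n then a (n - j) * (n : ℝ) ^ β * g j else 0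
  have hf_add : ∀ k j, f (k + j) j = a k * ((k + j : ℕ) : ℝ) ^ β * g j := fun k j => by simp [f]
  have hf_sum : ∀ n, ∑' j, f n j = (∑ p ∈ antidiagonal n, a p.1 * g p.2) * (n : ℝ) ^ β := by
    intro n
    rw [tsum_eq_sum (s := range (n + 1)) fun j hj => if_neg (by simpa using hj),
      ← Nat.sum_antidiagonal_swap, Nat.sum_antidiagonal_eq_sum_range_succ_mk, sum_mul]
    refine sum_congr rfl fun j hj => ?_
    rw [if_pos (by grind)]
    exact mul_right_comm _ _ _
  have hf_lim : ∀ j, Tendsto (f · j) atTop (𝓝 (ℓ * g j)) := fun j => by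
    rw [← tendsto_add_atTop_iff_nat j]
    simp only [hf_add]
    exact ((tendsto_mul_natCast_add_rpow_iff j).2 ha).mul_const (g j)
  have hf_le : ∀ n j, ‖f n j‖ ≤ M * (|g j| * ((j : ℝ) + 1) ^ β) := by
    intro n j
    by_cases hj : j ≤ n
    · obtain ⟨k, rfl⟩ := Nat.exists_eq_add_of_le' hj
      rw [hf_add, Real.norm_eq_abs, abs_mul, abs_mul,
        abs_of_nonneg (Real.rpow_nonneg (Nat.cast_nonneg _) β)]
      calc |a k| * ((k + j : ℕ) : ℝ) ^ β * |g j| ≤ M * ((j : ℝ) + 1) ^ β * |g j| :=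
            mul_le_mul_of_nonneg_right (hM k j) (abs_nonneg _)
        _ = M * (|g j| * ((j : ℝ) + 1) ^ β) := by ring
    · have hM0 : 0 ≤ M := by simpa using (by positivity : 0 ≤ |a 0| * _).trans (hM 0 0)
      rw [show f n j = 0 from if_neg hj, norm_zero]
      positivity
  simpa only [hf_sum, tsum_mul_left] using tendsto_tsum_of_dominated_convergence (𝓕 := atTop)
    (hg.mul_left M) hf_lim (.of_forall hf_le)

end Convolution

theorem factorial_mul_multichoose_eq_prod (s : ℝ) (n : ℕ) :
    (n.factorial : ℝ) * Ring.multichoose s n = ∏ j ∈ range n, (s + j) := by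
  rw [← nsmul_eq_mul, Ring.factorial_nsmul_multichoose_eq_ascPochhammer,
    Polynomial.ascPochhammer_smeval_eq_eval]
  induction n with
  | zero => simp
  | succ n ih => rw [ascPochhammer_succ_eval, ih, prod_range_succ]

theorem tendsto_multichoose_mul_rpow {s : ℝ} (hs : ∀ m : ℕ, s ≠ -m) :
    Tendsto (fun n : ℕ => Ring.multichoose s n * (n : ℝ) ^ (1 - s)) atTop
      (𝓝 (Real.Gamma s)⁻¹) := by
  have hlim : Tendsto (fun n : ℕ => (n / (n + s)) * (Real.GammaSeq s n)⁻¹) atTop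
      (𝓝 (Real.Gamma s)⁻¹) := by
    simpa using (tendsto_natCast_div_add_atTop s).mul
      ((Real.GammaSeq_tendsto_Gamma s).inv₀ (Real.Gamma_ne_zero hs))
  refine hlim.congr' ?_
  filter_upwards [eventually_ne_atTop 0] with n hn
  have hn_pos : (0 : ℝ) < n := by positivity
  have hsn : s + n ≠ 0 := fun h => hs n (eq_neg_of_add_eq_zero_left h)
  have hns : (n : ℝ) + s ≠ 0 := by rwa [add_comm]
  rw [Real.GammaSeq, prod_range_succ, ← factorial_mul_multichoose_eq_prod, inv_div,
    Real.rpow_sub hn_pos, Real.rpow_one]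
  field_simp
  ring

/-! ### Weighted norms of power series -/

section WeightedNorm

variable {𝕜 : Type*} [NormedField 𝕜]

/-- The weighted `ℓ¹` norm `∑ ‖fₙ‖ rⁿ` of a formal power series. It takes values in `ℝ≥0∞`, so that
`weightedNorm r F ≠ ∞` says that `F` converges absolutely on the disc of radius `r`. -/
noncomputable def weightedNorm (r : ℝ≥0) (F : 𝕜⟦X⟧) : ℝ≥0∞ :=
  ∑' n, ‖coeff n F‖ₑ * r ^ n

theorem tsum_mul_tsum_eq_tsum_sum_antidiagonal_ennreal (f g : ℕ → ℝ≥0∞) :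
    (∑' n, f n) * ∑' n, g n = ∑' n, ∑ p ∈ antidiagonal n, f p.1 * g p.2 := by
  calc (∑' n, f n) * ∑' n, g n = ∑' p : ℕ × ℕ, f p.1 * g p.2 := by
        rw [ENNReal.tsum_prod (f := fun i j => f i * g j)]
        simp only [ENNReal.tsum_mul_left, ENNReal.tsum_mul_right]
    _ = ∑' n, ∑ p ∈ antidiagonal n, f p.1 * g p.2 := by
        rw [← HasAntidiagonal.sigmaAntidiagonalEquivProd.tsum_eq, ENNReal.tsum_sigma']
        exact tsum_congr fun n => Finset.tsum_subtype' (antidiagonal n) fun p => f p.1 * g p.2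

theorem weightedNorm_add_le (r : ℝ≥0) (F G : 𝕜⟦X⟧) :
    weightedNorm r (F + G) ≤ weightedNorm r F + weightedNorm r G := by
  simp only [weightedNorm, map_add, ← ENNReal.tsum_add, ← add_mul]
  gcongr
  exact enorm_add_le _ _

theorem weightedNorm_mul_le (r : ℝ≥0) (F G : 𝕜⟦X⟧) :
    weightedNorm r (F * G) ≤ weightedNorm r F * weightedNorm r G := by
  rw [weightedNorm, weightedNorm, weightedNorm, tsum_mul_tsum_eq_tsum_sum_antidiagonal_ennreal]
  refine ENNReal.tsum_le_tsum fun n => ?_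
  calc ‖coeff n (F * G)‖ₑ * (r : ℝ≥0∞) ^ n
      ≤ (∑ p ∈ antidiagonal n, ‖coeff p.1 F‖ₑ * ‖coeff p.2 G‖ₑ) * r ^ n := by
        rw [PowerSeries.coeff_mul]
        gcongr
        exact (enorm_sum_le _ _).trans (sum_le_sum fun p _ => (enorm_mul _ _).le)
    _ = ∑ p ∈ antidiagonal n, ‖coeff p.1 F‖ₑ * r ^ p.1 * (‖coeff p.2 G‖ₑ * r ^ p.2) := by
        rw [sum_mul]
        refine sum_congr rfl fun p hp => ?_
        rw [← mem_antidiagonal.1 hp, pow_add]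
        ring

theorem weightedNorm_mono {r s : ℝ≥0} (hrs : r ≤ s) (F : 𝕜⟦X⟧) :
    weightedNorm r F ≤ weightedNorm s F := by
  unfold weightedNorm
  gcongr

theorem weightedNorm_C (r : ℝ≥0) (a : 𝕜) : weightedNorm r (C a) = ‖a‖ₑ := by
  rw [weightedNorm, tsum_eq_single 0 fun n hn => by simp [PowerSeries.coeff_C, hn]]
  simp

theorem weightedNorm_X (r : ℝ≥0) : weightedNorm r (X : 𝕜⟦X⟧) = r := by
  rw [weightedNorm, tsum_eq_single 1 fun n hn => by simp [PowerSeries.coeff_X, hn]]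
  simp

theorem weightedNorm_rescale_mk_one (r : ℝ≥0) (a : 𝕜) :
    weightedNorm r (rescale a (PowerSeries.mk 1)) = (1 - ‖a‖ₑ * r)⁻¹ := by
  simp [weightedNorm, PowerSeries.coeff_rescale, enorm_pow, ← mul_pow, ENNReal.tsum_geometric]

theorem weightedNorm_pow_le (r : ℝ≥0) (F : 𝕜⟦X⟧) (d : ℕ) :
    weightedNorm r (F ^ d) ≤ weightedNorm r F ^ d := by
  induction d with
  | zero => simpa using (weightedNorm_C r (1 : 𝕜)).le
  | succ d ih =>
    rw [pow_succ, pow_succ]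
    exact (weightedNorm_mul_le r _ _).trans (by gcongr)

theorem coeff_subst_eq_tsum {V : 𝕜⟦X⟧} (hV : HasSubst V) (F : 𝕜⟦X⟧) (n : ℕ) :
    coeff n (F.subst V) = ∑' d, coeff d F * coeff n (V ^ d) := by
  rw [PowerSeries.coeff_subst' hV]
  exact (tsum_eq_finsum (PowerSeries.coeff_subst_finite' hV F n)).symm

theorem weightedNorm_subst_le (r : ℝ≥0) {V : 𝕜⟦X⟧} (hV : HasSubst V) (F : 𝕜⟦X⟧) :
    weightedNorm r (F.subst V) ≤ ∑' d, ‖coeff d F‖ₑ * weightedNorm r V ^ d := by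
  calc weightedNorm r (F.subst V)
      ≤ ∑' n, ∑' d, ‖coeff d F‖ₑ * (‖coeff n (V ^ d)‖ₑ * r ^ n) := by
        refine ENNReal.tsum_le_tsum fun n => ?_
        rw [coeff_subst_eq_tsum hV]
        simp only [← mul_assoc, ENNReal.tsum_mul_right]
        gcongr
        exact enorm_tsum_le_tsum_enorm.trans_eq (by simp only [enorm_mul])
    _ = ∑' d, ‖coeff d F‖ₑ * weightedNorm r (V ^ d) := by
        rw [ENNReal.tsum_comm]
        simp only [ENNReal.tsum_mul_left, weightedNorm]
    _ ≤ ∑' d, ‖coeff d F‖ₑ * weightedNorm r V ^ d := by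
        gcongr with d
        exact weightedNorm_pow_le r V d

theorem summable_norm_coeff_mul_pow {r : ℝ≥0} {F : 𝕜⟦X⟧} (hF : weightedNorm r F ≠ ∞) :
    Summable fun n => ‖coeff n F‖ * (r : ℝ) ^ n :=
  .of_enorm (by simpa [weightedNorm, enorm_mul, enorm_pow] using hF)

theorem summable_norm_coeff_mul_rpow {r : ℝ≥0} (hr : 1 < r) {F : 𝕜⟦X⟧} (hF : weightedNorm r F ≠ ∞)
    (β : ℝ) : Summable fun n => ‖coeff n F‖ * ((n : ℝ) + 1) ^ β := by
  have hr' : (1 : ℝ) < r := hr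
  have hgrowth : (fun n : ℕ => ((n : ℝ) + 1) ^ β) =o[atTop] fun n : ℕ => (r : ℝ) ^ (n + 1) := by
    have h := (isLittleO_rpow_exp_pos_mul_atTop β (Real.log_pos hr')).comp_tendsto
      (tendsto_natCast_atTop_atTop.comp (tendsto_add_atTop_nat 1))
    simpa [Function.comp_def, Real.exp_mul, Real.exp_log (zero_lt_one.trans hr'),
      ← Real.rpow_natCast] using h
  refine summable_of_isBigO_nat ((summable_norm_coeff_mul_pow hF).mul_right (r : ℝ)) ?_
  simpa only [mul_assoc, ← pow_succ] using
    (Asymptotics.isBigO_refl (fun n => ‖coeff n F‖) atTop).mul hgrowth.isBigO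

theorem summable_norm_coeff {F : 𝕜⟦X⟧} (hF : weightedNorm 1 F ≠ ∞) :
    Summable fun n => ‖coeff n F‖ := by
  simpa using summable_norm_coeff_mul_pow hF

theorem tsum_coeff_C (a : 𝕜) : ∑' n, coeff n (C a) = a := by
  rw [tsum_eq_single 0 fun n hn => by simp [PowerSeries.coeff_C, hn]]
  simp

theorem tsum_coeff_X : ∑' n, coeff n (X : 𝕜⟦X⟧) = 1 := by
  rw [tsum_eq_single 1 fun n hn => by simp [PowerSeries.coeff_X, hn]]
  simp

theorem tsum_coeff_rescale_mk_one {a : 𝕜} (ha : ‖a‖ < 1) :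
    ∑' n, coeff n (rescale a (PowerSeries.mk 1)) = (1 - a)⁻¹ := by
  simpa using tsum_geometric_of_norm_lt_one ha

section Evaluation

variable [CompleteSpace 𝕜]

theorem tsum_coeff_add {F G : 𝕜⟦X⟧} (hF : weightedNorm 1 F ≠ ∞) (hG : weightedNorm 1 G ≠ ∞) :
    ∑' n, coeff n (F + G) = ∑' n, coeff n F + ∑' n, coeff n G := by
  simpa using (summable_norm_coeff hF).of_norm.tsum_add (summable_norm_coeff hG).of_norm

theorem tsum_coeff_mul {F G : 𝕜⟦X⟧} (hF : weightedNorm 1 F ≠ ∞) (hG : weightedNorm 1 G ≠ ∞) :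
    ∑' n, coeff n (F * G) = (∑' n, coeff n F) * ∑' n, coeff n G := by
  have h := tsum_mul_tsum_eq_tsum_sum_antidiagonal_of_summable_norm (f := fun n => coeff n F)
    (g := fun n => coeff n G) (summable_norm_coeff hF) (summable_norm_coeff hG)
  simpa only [PowerSeries.coeff_mul] using h.symm

theorem tsum_coeff_pow {F : 𝕜⟦X⟧} (hF : weightedNorm 1 F ≠ ∞) (d : ℕ) :
    ∑' n, coeff n (F ^ d) = (∑' n, coeff n F) ^ d := by
  induction d with
  | zero => simp [PowerSeries.coeff_one]
  | succ d ih =>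
    rw [pow_succ, pow_succ, ← ih, tsum_coeff_mul _ hF]
    exact ne_top_of_le_ne_top (ENNReal.pow_ne_top hF) (weightedNorm_pow_le 1 F d)

theorem tsum_coeff_subst {F V : 𝕜⟦X⟧} (hV : HasSubst V) (hV_fin : weightedNorm 1 V ≠ ∞)
    (hF : ∑' d, ‖coeff d F‖ₑ * weightedNorm 1 V ^ d ≠ ∞) :
    ∑' n, coeff n (F.subst V) = ∑' d, coeff d F * (∑' n, coeff n V) ^ d := by
  have hsummable : Summable (Function.uncurry fun d n => coeff d F * coeff n (V ^ d)) := by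
    refine .of_enorm (ne_top_of_le_ne_top hF ?_)
    rw [ENNReal.tsum_prod']
    refine ENNReal.tsum_le_tsum fun d => ?_
    simp only [Function.uncurry, enorm_mul, ENNReal.tsum_mul_left]
    gcongr
    simpa [weightedNorm] using weightedNorm_pow_le 1 V d
  simp only [coeff_subst_eq_tsum hV]
  rw [hsummable.tsum_comm]
  simp only [tsum_mul_left, tsum_coeff_pow hV_fin]

end Evaluation

end WeightedNorm

theorem tsum_enorm_choose_mul_pow_ne_top (a : ℝ) {x : ℝ≥0∞} (hx : x < 1) :
    ∑' d, ‖Ring.choose a d‖ₑ * x ^ d ≠ ∞ := by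
  lift x to ℝ≥0 using hx.ne_top
  have hsum := (binomialSeries ℝ a).summable_norm_mul_pow (hx.trans_le binomialSeries_radius_ge_one)
  simp only [binomialSeries, FormalMultilinearSeries.ofScalars_norm] at hsum
  have := hsum.tsum_ofReal_ne_top
  simpa [ENNReal.ofReal_mul, ENNReal.ofReal_pow, Real.enorm_eq_ofReal_abs] using this

theorem tsum_choose_mul_pow (a : ℝ) {x : ℝ} (hx : |x| < 1) :
    ∑' d, Ring.choose a d * x ^ d = (1 + x) ^ a := by
  have hball : x ∈ Metric.eball (0 : ℝ) 1 := by
    simpa [Real.enorm_eq_ofReal_abs] using hx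
  have hsum := Real.one_add_rpow_hasFPowerSeriesOnBall_zero (a := a).hasSum hball
  simpa [-FormalMultilinearSeries.apply_eq_prod_smul_coeff, binomialSeries_apply, mul_comm]
    using hsum.tsum_eq

/-! ### Coefficients at a branch point -/

/-- The power series `(1 - X) ^ a` for a real exponent `a`. -/
noncomputable def oneSubXRPow (a : ℝ) : ℝ⟦X⟧ :=
  rescale (-1) (PowerSeries.binomialSeries ℝ a)

theorem coeff_oneSubXRPow (a : ℝ) (n : ℕ) : coeff n (oneSubXRPow a) = Ring.multichoose (-a) n := by
  have hchoose : Ring.choose a n = (-1) ^ n * Ring.multichoose (-a) n := by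
    rw [← neg_neg a, Ring.choose_neg', neg_neg, Units.smul_def, zsmul_eq_mul,
      Int.cast_negOnePow_natCast]
  rw [oneSubXRPow, PowerSeries.coeff_rescale, PowerSeries.binomialSeries_coeff, hchoose,
    smul_eq_mul, mul_one, ← mul_assoc, ← mul_pow, neg_one_mul, neg_neg, one_pow, one_mul]

theorem constantCoeff_oneSubXRPow (a : ℝ) : constantCoeff (oneSubXRPow a) = 1 := by
  rw [← PowerSeries.coeff_zero_eq_constantCoeff_apply, coeff_oneSubXRPow,
    Ring.multichoose_zero_right]

theorem tendsto_coeff_oneSubXRPow_mul {a : ℝ} (ha : -1 ≤ a) (ha_nat : ∀ m : ℕ, a ≠ m)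
    {r : ℝ≥0} (hr : 1 < r) {G : ℝ⟦X⟧} (hG : weightedNorm r G ≠ ∞) :
    Tendsto (fun n : ℕ => coeff n (oneSubXRPow a * G) * (n : ℝ) ^ (a + 1)) atTop
      (𝓝 ((Real.Gamma (-a))⁻¹ * ∑' n, coeff n G)) := by
  have hbinom : Tendsto (fun n : ℕ => coeff n (oneSubXRPow a) * (n : ℝ) ^ (a + 1)) atTop
      (𝓝 (Real.Gamma (-a))⁻¹) := by
    simpa [coeff_oneSubXRPow, add_comm] using
      tendsto_multichoose_mul_rpow (s := -a) fun m h => ha_nat m (neg_injective h)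
  simpa only [PowerSeries.coeff_mul] using tendsto_sum_antidiagonal_mul_rpow (by linarith) hbinom
    (summable_norm_coeff_mul_rpow hr hG (a + 1))

theorem binomialSeries_half_sq : PowerSeries.binomialSeries ℝ (1 / 2 : ℝ) ^ 2 = 1 + X := by
  rw [sq, ← PowerSeries.binomialSeries_add, add_halves]
  simpa using PowerSeries.binomialSeries_nat (R := ℝ) (A := ℝ) 1

theorem oneSubXRPow_half_sq : oneSubXRPow (1 / 2) ^ 2 = 1 - X := by
  rw [oneSubXRPow, ← map_pow, binomialSeries_half_sq, map_add, map_one, PowerSeries.rescale_X,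
    map_neg, map_one, neg_one_mul, sub_eq_add_neg]

theorem binomialSeries_half_subst_sq {V : ℝ⟦X⟧} (hV : HasSubst V) :
    (PowerSeries.binomialSeries ℝ (1 / 2 : ℝ)).subst V ^ 2 = 1 + V := by
  rw [← PowerSeries.subst_pow hV, binomialSeries_half_sq, ← PowerSeries.coe_substAlgHom hV,
    map_add, map_one, PowerSeries.substAlgHom_X]

theorem constantCoeff_subst_of_constantCoeff_eq_zero {R : Type*} [CommRing R] {V : R⟦X⟧}
    (hV : constantCoeff V = 0) (F : R⟦X⟧) : constantCoeff (F.subst V) = constantCoeff F := by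
  rw [← PowerSeries.coeff_zero_eq_constantCoeff_apply,
    PowerSeries.coeff_subst' (HasSubst.of_constantCoeff_zero' hV), finsum_eq_single _ 0]
  · simp
  · intro d hd
    simp [hV, hd]

theorem eq_of_sq_eq_sq_of_constantCoeff_eq_one {R : Type*} [CommRing R] [IsDomain R]
    [NeZero (2 : R)] {F G : R⟦X⟧} (hF : constantCoeff F = 1) (hG : constantCoeff G = 1)
    (h : F ^ 2 = G ^ 2) : F = G := by
  refine (sq_eq_sq_iff_eq_or_eq_neg.1 h).resolve_right fun hneg => ?_
  have hone : (1 : R) = -1 := by simpa [hF, hG] using congrArg constantCoeff hneg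
  exact two_ne_zero (α := R) (by rw [← one_add_one_eq_two, ← eq_neg_iff_add_eq_zero, ← hone])

theorem eq_oneSubXRPow_half_mul_subst {F V : ℝ⟦X⟧} (hF : constantCoeff F = 1)
    (hV : constantCoeff V = 0) (h : F ^ 2 = (1 - X) * (1 + V)) :
    F = oneSubXRPow (1 / 2) * (PowerSeries.binomialSeries ℝ (1 / 2 : ℝ)).subst V := by
  refine eq_of_sq_eq_sq_of_constantCoeff_eq_one hF ?_ ?_
  · rw [map_mul, constantCoeff_oneSubXRPow, constantCoeff_subst_of_constantCoeff_eq_zero hV,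
      PowerSeries.binomialSeries_constantCoeff, one_mul]
  · rw [mul_pow, oneSubXRPow_half_sq,
      binomialSeries_half_subst_sq (HasSubst.of_constantCoeff_zero' hV), h]

theorem weightedNorm_binomialSeries_subst_ne_top (a : ℝ) {r : ℝ≥0} {V : ℝ⟦X⟧} (hV : HasSubst V)
    (hV_lt : weightedNorm r V < 1) :
    weightedNorm r ((PowerSeries.binomialSeries ℝ a).subst V) ≠ ∞ := by
  refine ne_top_of_le_ne_top ?_ (weightedNorm_subst_le r hV _)
  simpa using tsum_enorm_choose_mul_pow_ne_top a hV_lt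

theorem abs_tsum_coeff_lt_one {V : ℝ⟦X⟧} (hV : weightedNorm 1 V < 1) : |∑' n, coeff n V| < 1 := by
  have hle : ‖∑' n, coeff n V‖ₑ ≤ weightedNorm 1 V :=
    enorm_tsum_le_tsum_enorm.trans_eq (by simp [weightedNorm])
  simpa [Real.enorm_eq_ofReal_abs] using hle.trans_lt hV

theorem tsum_coeff_binomialSeries_subst (a : ℝ) {V : ℝ⟦X⟧} (hV : HasSubst V)
    (hV_lt : weightedNorm 1 V < 1) :
    ∑' n, coeff n ((PowerSeries.binomialSeries ℝ a).subst V) = (1 + ∑' n, coeff n V) ^ a := by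
  rw [tsum_coeff_subst hV hV_lt.ne_top
    (by simpa using tsum_enorm_choose_mul_pow_ne_top a hV_lt)]
  simpa using tsum_choose_mul_pow a (abs_tsum_coeff_lt_one hV_lt)

theorem Gamma_neg_one_half_eq : Real.Gamma (-(1 / 2)) = -(2 * √Real.pi) := by
  have h := Real.Gamma_add_one (s := -(1 / 2)) (by norm_num)
  rw [show (-(1 / 2) + 1 : ℝ) = 1 / 2 by norm_num, Real.Gamma_one_half_eq] at h
  linarith

theorem tendsto_coeff_of_sq_eq_one_sub_X_mul {F V : ℝ⟦X⟧} {r : ℝ≥0} (hr : 1 < r)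
    (hF : constantCoeff F = 1) (hV : constantCoeff V = 0) (hV_lt : weightedNorm r V < 1)
    (h : F ^ 2 = (1 - X) * (1 + V)) :
    Tendsto (fun n : ℕ => coeff n F * (n : ℝ) ^ (3 / 2 : ℝ)) atTop
      (𝓝 (-(√(1 + ∑' n, coeff n V) / (2 * √Real.pi)))) := by
  have hsubst : HasSubst V := HasSubst.of_constantCoeff_zero' hV
  have hhalf : ∀ m : ℕ, (1 / 2 : ℝ) ≠ m := fun m hm => by
    have : (1 : ℕ) = 2 * m := by exact_mod_cast (by linarith : (1 : ℝ) = 2 * m)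
    omega
  have hlim := tendsto_coeff_oneSubXRPow_mul (by norm_num) hhalf hr
    (weightedNorm_binomialSeries_subst_ne_top (1 / 2) hsubst hV_lt)
  rw [← eq_oneSubXRPow_half_mul_subst hF hV h, tsum_coeff_binomialSeries_subst _ hsubst
    ((weightedNorm_mono hr.le V).trans_lt hV_lt), Gamma_neg_one_half_eq, ← Real.sqrt_eq_rpow,
    inv_neg, neg_mul, inv_mul_eq_div] at hlim
  convert hlim using 4
  norm_num

/-! ### Lambda terms -/

namespace Term

/-- A term of size `n + 1` is the variable `var n`, an abstraction of a term of size `n`, or an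
application of two terms whose sizes add up to `n`. -/
def sizeSuccEquiv (n : ℕ) : {t : Term // t.size = n + 1} ≃
    Unit ⊕ {t : Term // t.size = n} ⊕
      (Σ p : antidiagonal n, {t : Term // t.size = p.1.1} × {t : Term // t.size = p.1.2}) where
  toFun
    | ⟨var _, _⟩ => .inl ()
    | ⟨abs M, h⟩ => .inr (.inl ⟨M, Nat.succ_injective h⟩)
    | ⟨app M N, h⟩ =>
      .inr (.inr ⟨⟨(M.size, N.size), mem_antidiagonal.2 (Nat.succ_injective h)⟩,
        ⟨M, rfl⟩, ⟨N, rfl⟩⟩)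
  invFun
    | .inl _ => ⟨var n, rfl⟩
    | .inr (.inl M) => ⟨abs M, congrArg (· + 1) M.2⟩
    | .inr (.inr ⟨p, M, N⟩) => ⟨app M N, by rw [size, M.2, N.2, mem_antidiagonal.1 p.2]⟩
  left_inv := by
    rintro ⟨k | _ | _, h⟩
    · obtain rfl : k = n := Nat.succ_injective h
      rfl
    · rfl
    · rfl
  right_inv := by
    rintro (_ | _ | ⟨⟨⟨i, j⟩, _⟩, ⟨M, rfl : M.size = i⟩, ⟨N, rfl : N.size = j⟩⟩) <;> rfl

theorem size_pos (t : Term) : 0 < t.size := by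
  cases t <;> exact Nat.succ_pos _

instance isEmpty_size_eq_zero : IsEmpty {t : Term // t.size = 0} :=
  ⟨fun t => t.1.size_pos.ne' t.2⟩

instance finite_size_eq (n : ℕ) : Finite {t : Term // t.size = n} := by
  induction n using Nat.strong_induction_on with
  | _ n ih =>
    cases n with
    | zero => infer_instance
    | succ n =>
      have := ih n n.lt_succ_self
      have hpairs (p : antidiagonal n) :
          Finite ({t : Term // t.size = p.1.1} × {t : Term // t.size = p.1.2}) := by
        have hp := mem_antidiagonal.1 p.2
        have := ih p.1.1 (by lia)
        have := ih p.1.2 (by lia)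
        infer_instance
      exact Finite.of_equiv _ (sizeSuccEquiv n).symm

end Term

theorem L_zero : L 0 = 0 := Nat.card_of_isEmpty

theorem L_succ (n : ℕ) : L (n + 1) = 1 + L n + ∑ p ∈ antidiagonal n, L p.1 * L p.2 := by
  rw [L, Nat.card_congr (Term.sizeSuccEquiv n), Nat.card_sum, Nat.card_sum, Nat.card_sigma,
    Nat.card_unique, ← add_assoc]
  simp only [Nat.card_prod]
  exact congrArg _ (sum_coe_sort (antidiagonal n) fun p => L p.1 * L p.2)

/-- The generating function `∑ L(n) Xⁿ` of lambda terms by size. -/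
noncomputable def termSeries : ℝ⟦X⟧ := PowerSeries.mk fun n => (L n : ℝ)

theorem termSeries_eq :
    termSeries = X * (PowerSeries.mk 1 + termSeries + termSeries ^ 2) := by
  ext n
  cases n with
  | zero => simp [termSeries, L_zero]
  | succ n =>
    rw [PowerSeries.coeff_succ_X_mul]
    simp [termSeries, L_succ, sq, PowerSeries.coeff_mul]

/-- The square root `1 - X - 2XT` of the discriminant of the quadratic equation
`X T² - (1 - X) T + X / (1 - X) = 0` satisfied by the generating function `T` of lambda terms. -/
noncomputable def sqrtDiscriminant : ℝ⟦X⟧ := 1 - X - 2 * X * termSeries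

theorem sqrtDiscriminant_sq :
    sqrtDiscriminant ^ 2 = (1 - X) ^ 2 - 4 * X ^ 2 * PowerSeries.mk 1 := by
  rw [sqrtDiscriminant]
  linear_combination -4 * X * termSeries_eq

theorem constantCoeff_rescale_sqrtDiscriminant (ρ : ℝ) :
    constantCoeff (rescale ρ sqrtDiscriminant) = 1 := by
  rw [← PowerSeries.coeff_zero_eq_constantCoeff_apply, PowerSeries.coeff_rescale]
  simp [sqrtDiscriminant]

theorem coeff_succ_sqrtDiscriminant {n : ℕ} (hn : n ≠ 0) :
    coeff (n + 1) sqrtDiscriminant = -2 * L n := by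
  simp [sqrtDiscriminant, termSeries, mul_assoc, ← map_ofNat C, PowerSeries.coeff_one,
    PowerSeries.coeff_X, hn]

/-- The power series `V = X ((1 - 2ρ) + ρ³X) / (1 - ρX)`. If `ρ` is a root of `z³ + z² + 3z - 1`,
then `(1 - X) (1 + V)` is the rescaled discriminant `(1 - ρX)² - 4ρ²X² / (1 - ρX)`, so `1 + V` is
what remains of it after splitting off the simple zero at `1`. -/
noncomputable def regularFactor (ρ : ℝ) : ℝ⟦X⟧ :=
  X * (C (1 - 2 * ρ) + C (ρ ^ 3) * X) * rescale ρ (PowerSeries.mk 1)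

theorem rescale_mk_one_mul_one_sub {R : Type*} [CommRing R] (a : R) :
    rescale a (PowerSeries.mk 1) * (1 - C a * X) = 1 := by
  rw [← PowerSeries.rescale_X, ← map_one (rescale a), ← map_sub, ← map_mul,
    PowerSeries.mk_one_mul_one_sub_eq_one]

theorem constantCoeff_regularFactor (ρ : ℝ) : constantCoeff (regularFactor ρ) = 0 := by
  simp [regularFactor]

section Singularity

variable {ρ : ℝ}

theorem rescale_sqrtDiscriminant_sq (hρ : ρ ^ 3 + ρ ^ 2 + 3 * ρ - 1 = 0) :
    rescale ρ sqrtDiscriminant ^ 2 = (1 - X) * (1 + regularFactor ρ) := by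
  have hρ_C : (C ρ : ℝ⟦X⟧) ^ 3 + C ρ ^ 2 + 3 * C ρ - 1 = 0 := by
    simpa [map_ofNat C] using congrArg (C (R := ℝ)) hρ
  have hsq : rescale ρ sqrtDiscriminant ^ 2 =
      (1 - C ρ * X) ^ 2 - 4 * (C ρ * X) ^ 2 * rescale ρ (PowerSeries.mk 1) := by
    simpa [PowerSeries.rescale_X, map_ofNat (rescale ρ)] using
      congrArg (rescale ρ) sqrtDiscriminant_sq
  rw [regularFactor, map_sub, map_mul, map_pow, map_one, map_ofNat]
  linear_combination hsq - X ^ 2 * rescale ρ (PowerSeries.mk 1) * hρ_C -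
    ((1 - C ρ * X) ^ 2 - (1 - X)) * rescale_mk_one_mul_one_sub ρ

theorem quarter_lt_of_cubic_eq_zero (hρ : ρ ^ 3 + ρ ^ 2 + 3 * ρ - 1 = 0) : 1 / 4 < ρ := by
  by_contra! h
  nlinarith [sq_nonneg ρ, sq_nonneg (ρ + 1), sq_nonneg (ρ + 1 / 2)]

theorem lt_third_of_cubic_eq_zero (hρ : ρ ^ 3 + ρ ^ 2 + 3 * ρ - 1 = 0) : ρ < 1 / 3 := by
  by_contra! h
  nlinarith [sq_nonneg ρ, pow_pos (by linarith : 0 < ρ) 3]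

theorem weightedNorm_regularFactor_le (r : ℝ≥0) (ρ : ℝ) :
    weightedNorm r (regularFactor ρ) ≤
      r * (‖1 - 2 * ρ‖ₑ + ‖ρ ^ 3‖ₑ * r) / (1 - ‖ρ‖ₑ * r) := by
  calc weightedNorm r (regularFactor ρ)
      ≤ weightedNorm r (X : ℝ⟦X⟧) * (weightedNorm r (C (1 - 2 * ρ)) +
          weightedNorm r (C (ρ ^ 3)) * weightedNorm r (X : ℝ⟦X⟧)) *
          weightedNorm r (rescale ρ (PowerSeries.mk 1)) := by
        refine (weightedNorm_mul_le r _ _).trans ?_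
        gcongr
        refine (weightedNorm_mul_le r _ _).trans ?_
        gcongr
        exact (weightedNorm_add_le r _ _).trans (by gcongr; exact weightedNorm_mul_le r _ _)
    _ = r * (‖1 - 2 * ρ‖ₑ + ‖ρ ^ 3‖ₑ * r) / (1 - ‖ρ‖ₑ * r) := by
        rw [weightedNorm_X, weightedNorm_C, weightedNorm_C, weightedNorm_rescale_mk_one,
          div_eq_mul_inv]

-- Any radius `r > 1` with `r (1 - ρ) + r² ρ³ < 1` would do.
theorem weightedNorm_regularFactor_lt_one (hρ : ρ ^ 3 + ρ ^ 2 + 3 * ρ - 1 = 0) :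
    weightedNorm (6 / 5) (regularFactor ρ) < 1 := by
  have hlow := quarter_lt_of_cubic_eq_zero hρ
  have hupp := lt_third_of_cubic_eq_zero hρ
  have hcube : ρ ^ 3 < 1 / 27 := by
    calc ρ ^ 3 < (1 / 3) ^ 3 := by gcongr
      _ = 1 / 27 := by norm_num
  have hr : ((6 / 5 : ℝ≥0) : ℝ≥0∞) = ENNReal.ofReal (6 / 5) := by
    rw [ENNReal.ofReal, Real.toNNReal_div (by norm_num)]
    norm_num
  have hnum : 0 ≤ 1 - 2 * ρ := by linarith
  have hden : 0 < 1 - ρ * (6 / 5) := by linarith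
  have hden_ofReal : 1 - ENNReal.ofReal ρ * ENNReal.ofReal (6 / 5) =
      ENNReal.ofReal (1 - ρ * (6 / 5)) := by
    rw [ENNReal.ofReal_sub _ (by positivity), ENNReal.ofReal_mul (by positivity),
      ENNReal.ofReal_one]
  calc weightedNorm (6 / 5) (regularFactor ρ)
      ≤ _ := weightedNorm_regularFactor_le _ _
    _ = ENNReal.ofReal (6 / 5 * (1 - 2 * ρ + ρ ^ 3 * (6 / 5)) / (1 - ρ * (6 / 5))) := by
        rw [hr, Real.enorm_of_nonneg hnum, Real.enorm_of_nonneg (by positivity),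
          Real.enorm_of_nonneg (by positivity), hden_ofReal, ENNReal.ofReal_div_of_pos hden,
          ENNReal.ofReal_mul (by norm_num), ENNReal.ofReal_add hnum (by positivity),
          ENNReal.ofReal_mul (by positivity)]
    _ < 1 := by
        rw [ENNReal.ofReal_lt_one, div_lt_one hden]
        linarith

theorem tsum_coeff_regularFactor (hρ : |ρ| < 1) :
    ∑' n, coeff n (regularFactor ρ) = (1 - 2 * ρ + ρ ^ 3) / (1 - ρ) := by
  have hX : weightedNorm 1 (X : ℝ⟦X⟧) ≠ ∞ := by simp [weightedNorm_X]
  have hC (a : ℝ) : weightedNorm 1 (C a) ≠ ∞ := by simp [weightedNorm_C]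
  have hmul {F G : ℝ⟦X⟧} (hF : weightedNorm 1 F ≠ ∞) (hG : weightedNorm 1 G ≠ ∞) :
      weightedNorm 1 (F * G) ≠ ∞ :=
    ne_top_of_le_ne_top (ENNReal.mul_ne_top hF hG) (weightedNorm_mul_le 1 F G)
  have hgeom : weightedNorm 1 (rescale ρ (PowerSeries.mk 1)) ≠ ∞ := by
    simpa [weightedNorm_rescale_mk_one, Real.enorm_eq_ofReal_abs, tsub_eq_zero_iff_le] using hρ
  have hlin : weightedNorm 1 (C (1 - 2 * ρ) + C (ρ ^ 3) * X) ≠ ∞ :=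
    ne_top_of_le_ne_top (ENNReal.add_ne_top.2 ⟨hC _, hmul (hC _) hX⟩) (weightedNorm_add_le 1 _ _)
  rw [regularFactor, tsum_coeff_mul (hmul hX hlin) hgeom, tsum_coeff_mul hX hlin,
    tsum_coeff_add (hC _) (hmul (hC _) hX), tsum_coeff_mul (hC _) hX, tsum_coeff_X, tsum_coeff_C,
    tsum_coeff_C, tsum_coeff_rescale_mk_one hρ, one_mul, mul_one, div_eq_mul_inv]

theorem one_add_tsum_coeff_regularFactor (hρ : ρ ^ 3 + ρ ^ 2 + 3 * ρ - 1 = 0) :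
    1 + ∑' n, coeff n (regularFactor ρ) = ρ * (3 * ρ ^ 2 + 2 * ρ + 3) / (1 - ρ) := by
  have hlow := quarter_lt_of_cubic_eq_zero hρ
  have hupp := lt_third_of_cubic_eq_zero hρ
  have hne : 1 - ρ ≠ 0 := by linarith
  rw [tsum_coeff_regularFactor (abs_lt.2 ⟨by linarith, by linarith⟩)]
  field_simp
  linear_combination -2 * hρ

theorem tendsto_coeff_rescale_sqrtDiscriminant (hρ : ρ ^ 3 + ρ ^ 2 + 3 * ρ - 1 = 0) :
    Tendsto (fun n : ℕ => coeff n (rescale ρ sqrtDiscriminant) * (n : ℝ) ^ (3 / 2 : ℝ)) atTop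
      (𝓝 (-(√(ρ * (3 * ρ ^ 2 + 2 * ρ + 3) / (1 - ρ)) / (2 * √Real.pi)))) := by
  rw [← one_add_tsum_coeff_regularFactor hρ]
  exact tendsto_coeff_of_sq_eq_one_sub_X_mul (by norm_num)
    (constantCoeff_rescale_sqrtDiscriminant ρ) (constantCoeff_regularFactor ρ)
    (weightedNorm_regularFactor_lt_one hρ) (rescale_sqrtDiscriminant_sq hρ)

end Singularity

theorem L_asymptotics (ρ C : ℝ)
    (hρ_mem : ρ ∈ Set.Ioo (0 : ℝ) 1)
    (hρ_root : ρ ^ 3 + ρ ^ 2 + 3 * ρ - 1 = 0)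
    (hC : C = Real.sqrt (ρ * (3 * ρ ^ 2 + 2 * ρ + 3) / (1 - ρ)) / (4 * ρ * Real.sqrt Real.pi)) :
    Filter.Tendsto (fun n : ℕ => (L n : ℝ) * ρ ^ n * (n : ℝ) ^ ((3 : ℝ) / 2))
      Filter.atTop (nhds C) := by
  have hρ_ne : ρ ≠ 0 := hρ_mem.1.ne'
  have hshift := (tendsto_mul_natCast_add_rpow_iff 1).1 <|
    (tendsto_add_atTop_iff_nat 1).2 (tendsto_coeff_rescale_sqrtDiscriminant hρ_root)
  have hlimit : C = -(1 / (2 * ρ)) *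
      -(√(ρ * (3 * ρ ^ 2 + 2 * ρ + 3) / (1 - ρ)) / (2 * √Real.pi)) := by
    rw [hC]
    ring
  rw [hlimit]
  refine (hshift.const_mul (-(1 / (2 * ρ)))).congr' ?_
  filter_upwards [eventually_ne_atTop 0] with n hn
  rw [PowerSeries.coeff_rescale, coeff_succ_sqrtDiscriminant hn]
  field_simp
  ring
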